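/- arXiv:math/0312072 — 4 statements merged into one kernel-verified Lean document; each statement's English description precedes it below -/
import Mathlib

section
/- Let g ≥ 2 be an integer and let b : ℕ → ℝ satisfy: (symmetry) b_m = b_{g−m} for all integers 0 ≤ m ≤ g, and (subadditivity) b_p + b_q ≥ b_{p+q} for all integers p, q ≥ 1 with p + q ≤ g − 1. If b_i = 0 for some integer 1 ≤ i ≤ g − 1, then b_j = b_k for all integers j, k ≥ 1 with j + k = i. -/
/-- Lemma 9 (1): if some coefficient vanishes, the coefficients indexed by a
partition of that index agree. -/
theorem stmt_1 (g : ℕ) (hg : 2 ≤ g) (b : ℕ → ℝ)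
    (hsym : ∀ m : ℕ, m ≤ g → b m = b (g - m))
    (hsub : ∀ p q : ℕ, 1 ≤ p → 1 ≤ q → p + q ≤ g - 1 → b (p + q) ≤ b p + b q)
    (i : ℕ) (hi1 : 1 ≤ i) (hig : i ≤ g - 1) (hbi : b i = 0) :
    ∀ j k : ℕ, 1 ≤ j → 1 ≤ k → j + k = i → b j = b k := by
  -- Since `g - j = (g - i) + k` and `b (g - i) = b i = 0`, subadditivity gives
  -- `b j = b (g - j) ≤ b k`; the reverse inequality follows by exchanging `j` and `k`.
  have key : ∀ j k : ℕ, 1 ≤ j → 1 ≤ k → j + k = i → b j ≤ b k := by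
    intro j k hj hk hjk
    have h := hsub (g - i) k (by omega) hk (by omega)
    rw [show g - i + k = g - j by omega, ← hsym j (by omega), ← hsym i (by omega), hbi,
      zero_add] at h
    exact h
  intro j k hj hk hjk
  exact le_antisymm (key j k hj hk hjk) (key k j hk hj (by omega))
end

section
/- Let g ≥ 2 be an integer and let b : ℕ → ℝ satisfy: (symmetry) b_m = b_{g−m} for all integers 0 ≤ m ≤ g, and (subadditivity) b_p + b_q ≥ b_{p+q} for all integers p, q ≥ 1 with p + q ≤ g − 1. If b_i = 0 for some integer 1 ≤ i ≤ g − 1, then b_j = b_{i+j} for all integers j ≥ 1 with i + j ≤ g − 1. -/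
/-- Lemma 9 (2): if `b i = 0` then `b` is `i`-periodic in the admissible range. -/
theorem stmt_2 (g : ℕ) (hg : 2 ≤ g) (b : ℕ → ℝ)
    (hsym : ∀ m : ℕ, m ≤ g → b m = b (g - m))
    (hsub : ∀ p q : ℕ, 1 ≤ p → 1 ≤ q → p + q ≤ g - 1 → b (p + q) ≤ b p + b q)
    (i : ℕ) (hi1 : 1 ≤ i) (hig : i ≤ g - 1) (hbi : b i = 0) :
    ∀ j : ℕ, 1 ≤ j → i + j ≤ g - 1 → b j = b (i + j) := by
  intro j hj hij
  apply le_antisymm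
  -- Reflecting by `m ↦ g - m` turns the shift by `i` around: `g - j = i + (g - (i + j))`.
  · have h := hsub i (g - (i + j)) hi1 (by omega) (by omega)
    rw [show i + (g - (i + j)) = g - j by omega, ← hsym j (by omega),
      ← hsym (i + j) (by omega)] at h
    linarith
  · linarith [hsub i j hi1 hj hij]
end

section
/- Let g ≥ 3 be an odd integer and let b : ℕ → ℝ satisfy: (symmetry) b_m = b_{g−m} for all integers 0 ≤ m ≤ g, and (subadditivity) b_p + b_q ≥ b_{p+q} for all integers p, q ≥ 1 with p + q ≤ g − 1. If b_{(g−1)/2} = 0, then b_m = 0 for all integers 1 ≤ m ≤ g − 1. -/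
/-!
Write `g = 2k + 1`, so `b k = 0`. By symmetry and subadditivity, `b 1 = b (2k) ≤ 2 b k = 0`, and
subadditivity then gives `b m ≤ m * b 1 ≤ 0` for every `1 ≤ m ≤ g - 1`. Conversely, for `m < k`,
`0 = b k ≤ b m + b (k - m) ≤ b m`, and symmetry carries this lower bound to the indices above `k`.
-/

/-- Odd-genus middle-index case of Corollary 7: if the middle coefficient
vanishes then all coefficients vanish. -/
theorem stmt_5 (g : ℕ) (hg : 3 ≤ g) (hodd : Odd g) (b : ℕ → ℝ)
    (hsym : ∀ m : ℕ, m ≤ g → b m = b (g - m))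
    (hsub : ∀ p q : ℕ, 1 ≤ p → 1 ≤ q → p + q ≤ g - 1 → b (p + q) ≤ b p + b q)
    (hmid : b ((g - 1) / 2) = 0) :
    ∀ m : ℕ, 1 ≤ m → m ≤ g - 1 → b m = 0 := by
  obtain ⟨k, rfl⟩ := hodd
  have hk : b k = 0 := by
    rwa [show (2 * k + 1 - 1) / 2 = k by omega] at hmid
  have h1 : b 1 ≤ 0 := by
    have hs := hsym 1 (by omega)
    rw [show 2 * k + 1 - 1 = k + k by omega] at hs
    have := hsub k k (by omega) (by omega) (by omega)
    linarith
  have hle : ∀ m : ℕ, 1 ≤ m → m ≤ 2 * k → b m ≤ 0 := by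
    intro m hm
    induction m, hm using Nat.le_induction with
    | base => exact fun _ => h1
    | succ m hm ih =>
      intro hmk
      have := hsub m 1 hm le_rfl (by omega)
      linarith [ih (by omega)]
  have hlow : ∀ m : ℕ, 1 ≤ m → m ≤ k → b m = 0 := by
    intro m hm hmk
    rcases hmk.eq_or_lt with rfl | hlt
    · exact hk
    · have hs := hsub m (k - m) hm (by omega) (by omega)
      rw [show m + (k - m) = k by omega] at hs
      linarith [hle m hm (by omega), hle (k - m) (by omega) (by omega)]
  intro m hm hmg
  rcases le_or_gt m k with h | h
  · exact hlow m hm h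
  · rw [hsym m (by omega)]
    exact hlow _ (by omega) (by omega)
end

section
/- Let g ≥ 2 be an integer and let b : ℕ → ℝ satisfy: (symmetry) b_m = b_{g−m} for all integers 0 ≤ m ≤ g, and (subadditivity) b_p + b_q ≥ b_{p+q} for all integers p, q ≥ 1 with p + q ≤ g − 1. If b_k = 0 for some integer 2 ≤ k ≤ g − 1, then for every integer m ≥ 1 with mk ≤ g − 1 one has b_{mk} = 0 and b_{g−mk} = 0. -/
/-!
Induction on `m`, squeezing `b ((m + 1) * k)` between two instances of subadditivity.
Adding `k` to `m * k` gives `b ((m + 1) * k) ≤ b (m * k) + b k = 0`, while adding `k` to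
`g - (m + 1) * k` gives `b (g - m * k) ≤ b (g - (m + 1) * k) + b k`, which by the symmetry
of `b` says `0 ≤ b ((m + 1) * k)`.
-/

/-- Iteration step in Corollary 7: if `b k = 0` then `b (m*k) = 0` and
`b (g - m*k) = 0` whenever `m*k ≤ g - 1`. -/
theorem stmt_6 (g : ℕ) (hg : 2 ≤ g) (b : ℕ → ℝ)
    (hsym : ∀ m : ℕ, m ≤ g → b m = b (g - m))
    (hsub : ∀ p q : ℕ, 1 ≤ p → 1 ≤ q → p + q ≤ g - 1 → b (p + q) ≤ b p + b q)
    (k : ℕ) (hk2 : 2 ≤ k) (hkg : k ≤ g - 1) (hbk : b k = 0) :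
    ∀ m : ℕ, 1 ≤ m → m * k ≤ g - 1 → b (m * k) = 0 ∧ b (g - m * k) = 0 := by
  intro m hm
  induction m, hm using Nat.le_induction with
  | base =>
    intro _
    rw [one_mul]
    exact ⟨hbk, by rw [← hsym k (by omega), hbk]⟩
  | succ m hm ih =>
    intro h
    rw [add_mul, one_mul] at h ⊢
    have hmk : 1 ≤ m * k := Nat.mul_pos hm (by omega)
    obtain ⟨h0, h0'⟩ := ih (by omega)
    have hle := hsub (m * k) k hmk (by omega) h
    -- Subadditivity for the complementary indices `g - (m * k + k)` and `k`, whose sum is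
    -- `g - m * k`, gives the opposite inequality after reflection.
    have hge := hsub (g - (m * k + k)) k (by omega) (by omega) (by omega)
    rw [show g - (m * k + k) + k = g - m * k by omega, h0'] at hge
    have hs := hsym (m * k + k) (by omega)
    constructor <;> linarith
end
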